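/- The element δ = δ_1 + δ_2 of W ⊗ U(g) is odd with respect to the ℤ/2-grading and is g-invariant: [Γ(A) ⊗ 1 + 1 ⊗ A, δ] = 0 for all A ∈ g, where the bracket is the super-commutator in the superalgebra W ⊗ U(g). Indeed each of δ_1 and δ_2 is separately g-invariant. -/

import Mathlib

set_option synthInstance.maxHeartbeats 1000000
set_option maxHeartbeats 1000000

/-!
STATEMENT 3: the element `δ = δ₁ + δ₂` of `W ⊗ U(g)` is odd and `g`-invariant:
`[Γ(A) ⊗ 1 + 1 ⊗ A, δ] = 0` for all `A ∈ g` (super-commutator in the superalgebra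
`W ⊗ U(g)`); indeed each of `δ₁`, `δ₂` is separately `g`-invariant.

We present the super tensor product `W ⊗ U(g)` by generators `X a, ∂ a` (the Weyl
superalgebra `W = W_{Πg*}`, parity `p a + 1`) and `E a` (the universal enveloping
superalgebra `U(g)`, parity `p a`), with the two factors super-commuting.  Here `g` has
homogeneous basis `{E_a}_{a∈Λ}` and structure constants `f a b c = ad(E_a)_{bc}`
(`[E_a, E_c] = Σ_b f a b c E_b`), subject to the Lie superalgebra axioms `hpar`, `hskew`,
`hjac`.  A homogeneous `A ∈ g` of parity `ε` is given by coordinates `u : Λ → ℂ` supported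
in parity `ε`; for an odd element `δ`, the super-commutator is
`[Γ(A)⊗1 + 1⊗A, δ] = (Γ(A)+A)δ - (-1)^{[A]} δ(Γ(A)+A)`.  Oddness of `δ₁, δ₂` is expressed
by membership in the odd homogeneous subspace of `W ⊗ U(g)`.
-/

noncomputable section

/-- The sign `(-1)^ε` for `ε : ℤ/2`. -/
noncomputable def sgn (ε : ZMod 2) : ℂ := if ε = 0 then 1 else -1

/-- Generators of the superalgebra `W ⊗ U(g)`: the generators `X a`, `∂ a` of the Weyl
superalgebra `W = W_{Πg*}` and the generators `E a` of `U(g)`. -/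
inductive WUGen (Λ : Type) : Type
  | X : Λ → WUGen Λ
  | D : Λ → WUGen Λ
  | E : Λ → WUGen Λ

variable {Λ : Type} [DecidableEq Λ] [Fintype Λ]

/-- The parity of the generators: `[X a] = [∂ a] = p a + 1`, `[E a] = p a`. -/
def WUGen.parity (p : Λ → ZMod 2) : WUGen Λ → ZMod 2
  | .X a => p a + 1
  | .D a => p a + 1
  | .E a => p a

/-- The defining relations of `W ⊗ U(g)` (the super tensor product of the Weyl superalgebra
`W_{Πg*}` and the universal enveloping superalgebra `U(g)`): the super-Weyl relations among
the `X a, ∂ a`, the relations `E_aE_b - (-1)^{[E_a][E_b]}E_bE_a = [E_a,E_b] = Σ_e f a e b E_e`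
of `U(g)`, and super-commutation of the two tensor factors. -/
inductive WURel (p : Λ → ZMod 2) (f : Λ → Λ → Λ → ℂ) :
    FreeAlgebra ℂ (WUGen Λ) → FreeAlgebra ℂ (WUGen Λ) → Prop
  | XX (a b : Λ) : WURel p f
      (FreeAlgebra.ι ℂ (WUGen.X a) * FreeAlgebra.ι ℂ (WUGen.X b))
      (sgn ((p a + 1) * (p b + 1)) •
        (FreeAlgebra.ι ℂ (WUGen.X b) * FreeAlgebra.ι ℂ (WUGen.X a)))
  | DD (a b : Λ) : WURel p f
      (FreeAlgebra.ι ℂ (WUGen.D a) * FreeAlgebra.ι ℂ (WUGen.D b))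
      (sgn ((p a + 1) * (p b + 1)) •
        (FreeAlgebra.ι ℂ (WUGen.D b) * FreeAlgebra.ι ℂ (WUGen.D a)))
  | DX (a b : Λ) : WURel p f
      (FreeAlgebra.ι ℂ (WUGen.D a) * FreeAlgebra.ι ℂ (WUGen.X b))
      (sgn ((p a + 1) * (p b + 1)) •
        (FreeAlgebra.ι ℂ (WUGen.X b) * FreeAlgebra.ι ℂ (WUGen.D a)) +
        if a = b then 1 else 0)
  | EE (a b : Λ) : WURel p f
      (FreeAlgebra.ι ℂ (WUGen.E a) * FreeAlgebra.ι ℂ (WUGen.E b))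
      (sgn (p a * p b) •
        (FreeAlgebra.ι ℂ (WUGen.E b) * FreeAlgebra.ι ℂ (WUGen.E a)) +
        ∑ e : Λ, f a e b • FreeAlgebra.ι ℂ (WUGen.E e))
  | EX (a b : Λ) : WURel p f
      (FreeAlgebra.ι ℂ (WUGen.E a) * FreeAlgebra.ι ℂ (WUGen.X b))
      (sgn (p a * (p b + 1)) •
        (FreeAlgebra.ι ℂ (WUGen.X b) * FreeAlgebra.ι ℂ (WUGen.E a)))
  | ED (a b : Λ) : WURel p f
      (FreeAlgebra.ι ℂ (WUGen.E a) * FreeAlgebra.ι ℂ (WUGen.D b))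
      (sgn (p a * (p b + 1)) •
        (FreeAlgebra.ι ℂ (WUGen.D b) * FreeAlgebra.ι ℂ (WUGen.E a)))

/-- The superalgebra `W ⊗ U(g)`. -/
abbrev WU (p : Λ → ZMod 2) (f : Λ → Λ → Λ → ℂ) : Type := RingQuot (WURel p f)

/-- The image of a generator in `W ⊗ U(g)`. -/
noncomputable def genWU (p : Λ → ZMod 2) (f : Λ → Λ → Λ → ℂ) (s : WUGen Λ) : WU p f :=
  RingQuot.mkAlgHom ℂ (WURel p f) (FreeAlgebra.ι ℂ s)

/-- `X a ⊗ 1`. -/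
noncomputable def XU (p : Λ → ZMod 2) (f : Λ → Λ → Λ → ℂ) (a : Λ) : WU p f :=
  genWU p f (WUGen.X a)

/-- `∂ a ⊗ 1`. -/
noncomputable def DU (p : Λ → ZMod 2) (f : Λ → Λ → Λ → ℂ) (a : Λ) : WU p f :=
  genWU p f (WUGen.D a)

/-- `1 ⊗ E a`. -/
noncomputable def EU (p : Λ → ZMod 2) (f : Λ → Λ → Λ → ℂ) (a : Λ) : WU p f :=
  genWU p f (WUGen.E a)

/-- The homogeneous subspace of `W ⊗ U(g)` of parity `ε`: the span of all products of
generators of total parity `ε`. -/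
noncomputable def WUpar (p : Λ → ZMod 2) (f : Λ → Λ → Λ → ℂ) (ε : ZMod 2) :
    Submodule ℂ (WU p f) :=
  Submodule.span ℂ
    {w | ∃ l : List (WUGen Λ),
      w = (l.map (genWU p f)).prod ∧ (l.map (WUGen.parity p)).sum = ε}

/-- `Γ_a = Γ(E_a) = -Σ_{b,c} (-1)^{[E_a][E_c]} X_c ad(E_a)_{bc} ∂_b ∈ W ⊗ U(g)`. -/
noncomputable def GamU (p : Λ → ZMod 2) (f : Λ → Λ → Λ → ℂ) (a : Λ) : WU p f :=
  -∑ b : Λ, ∑ c : Λ, (sgn (p a * p c) * f a b c) • (XU p f c * DU p f b)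

/-- `δ₁ = Σ_a (-1)^{[E_a]} X_a ⊗ E_a`. -/
noncomputable def delta1 (p : Λ → ZMod 2) (f : Λ → Λ → Λ → ℂ) : WU p f :=
  ∑ a : Λ, sgn (p a) • (XU p f a * EU p f a)

/-- `δ₂ = (1/2) Σ_a (-1)^{[E_a]} X_a Γ_a ⊗ 1`. -/
noncomputable def delta2 (p : Λ → ZMod 2) (f : Λ → Λ → Λ → ℂ) : WU p f :=
  (1 / 2 : ℂ) • ∑ a : Λ, sgn (p a) • (XU p f a * GamU p f a)

/-- `δ = δ₁ + δ₂`. -/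
noncomputable def deltaWU (p : Λ → ZMod 2) (f : Λ → Λ → Λ → ℂ) : WU p f :=
  delta1 p f + delta2 p f

/-!
Write `⟦A, B⟧` for the super-commutator. The Weyl relations make `⟦·, ·⟧` with a quadratic element
`Q(M) = Σ M_{bc} X_c ∂_b` act linearly on the `X`'s (by the rows of `M`) and on the `∂`'s (by its
columns, up to sign), so by the Leibniz rule `⟦Q(M), Q(N)⟧ = Q(⟦N, M⟧)`. Now `Γ_a = Q(M_a)` for the
matrix `M_a` of the coadjoint action of `E_a`, and the Jacobi identity says that these matrices
satisfy `⟦M_d, M_a⟧ = Σ_e ad(E_a)_{ed} M_e`. Hence under `Γ_a + E_a` the families `E_d` and `Γ_d`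
both transform in the adjoint representation, while the family `X_d` transforms in its dual. The
elements `δ₁` and `2 δ₂` are the canonical contractions of dual families, hence invariant.
-/

section Parity

lemma add_one_add_self_eq_one (x : ZMod 2) : x + 1 + x = 1 := by
  decide +revert

lemma sgn_add (x y : ZMod 2) : sgn (x + y) = sgn x * sgn y := by
  have cases_two : ∀ z : ZMod 2, z = 0 ∨ z = 1 := by decide
  have one_add_one : (1 + 1 : ZMod 2) = 0 := by decide
  rcases cases_two x with rfl | rfl <;> rcases cases_two y with rfl | rfl <;>
    simp [sgn, one_add_one]

lemma sgn_mul_self (x : ZMod 2) : sgn x * sgn x = 1 := by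
  unfold sgn
  split_ifs <;> simp

end Parity

section SuperBracket

variable {R : Type*} [Ring R] [Algebra ℂ R]

/-- The super-commutator `A B - (-1)^{x y} B A`, as a bilinear map. The parities `x` of `A` and `y`
of `B` are arguments, so that no grading of `R` is needed. -/
def superBracket (x y : ZMod 2) : R →ₗ[ℂ] R →ₗ[ℂ] R :=
  LinearMap.mul ℂ R - sgn (x * y) • (LinearMap.mul ℂ R).flip

lemma superBracket_apply (x y : ZMod 2) (A B : R) :
    superBracket x y A B = A * B - sgn (x * y) • (B * A) := rfl

lemma superBracket_one_right (x : ZMod 2) (A B : R) :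
    superBracket x 1 A B = A * B - sgn x • (B * A) := by
  rw [superBracket_apply, mul_one]

lemma superBracket_swap (x y : ZMod 2) (A B : R) :
    superBracket y x B A = -sgn (x * y) • superBracket x y A B := by
  simp only [superBracket_apply, mul_comm y x, smul_sub, smul_smul, neg_mul, sgn_mul_self]
  module

lemma superBracket_mul_right (x y z : ZMod 2) (A B C : R) :
    superBracket x (y + z) A (B * C) =
      superBracket x y A B * C + sgn (x * y) • (B * superBracket x z A C) := by
  simp only [superBracket_apply, mul_add, sgn_add, sub_mul, mul_sub, smul_mul_assoc,
    mul_smul_comm, mul_assoc]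
  module

lemma superBracket_mul_left (x y z : ZMod 2) (A B C : R) :
    superBracket (x + y) z (A * B) C =
      A * superBracket y z B C + sgn (y * z) • (superBracket x z A C * B) := by
  simp only [superBracket_apply, add_mul, sgn_add, sub_mul, mul_sub, smul_mul_assoc,
    mul_smul_comm, mul_assoc]
  module

variable {ι : Type*} [Fintype ι]

lemma superBracket_sum_smul_eq_zero {p : ι → ZMod 2} {ε t : ZMod 2} {u : ι → ℂ} {G : ι → R} {B : R}
    (hu : ∀ a, u a ≠ 0 → p a = ε) (hG : ∀ a, superBracket (p a) t (G a) B = 0) :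
    superBracket ε t (∑ a, u a • G a) B = 0 := by
  simp only [map_sum, map_smul, LinearMap.sum_apply, LinearMap.smul_apply]
  refine Finset.sum_eq_zero fun a _ => ?_
  by_cases ha : u a = 0
  · rw [ha, zero_smul]
  · rw [← hu a ha, hG, smul_zero]

/-- `hdual` says that, for the pairing with weights `s`, the matrices `M` and `N` by which `G` acts
on the two families are negative super-transposes of one another. -/
lemma superBracket_contraction_eq_zero {q r : ι → ZMod 2} {m t : ZMod 2} {s : ι → ℂ}
    {M N : Matrix ι ι ℂ} {X Y : ι → R} {G : R} (hqr : ∀ d, q d + r d = t)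
    (hX : ∀ d, superBracket m (q d) G (X d) = ∑ c, M d c • X c)
    (hY : ∀ d, superBracket m (r d) G (Y d) = ∑ c, N c d • Y c)
    (hdual : ∀ c d, s d * M d c + s c * sgn (m * q c) * N d c = 0) :
    superBracket m t G (∑ d, s d • (X d * Y d)) = 0 := by
  have leibniz (d : ι) : superBracket m t G (X d * Y d) =
      ∑ c, M d c • (X c * Y d) + ∑ c, (sgn (m * q d) * N c d) • (X d * Y c) := by
    rw [← hqr d, superBracket_mul_right, hX, hY]
    simp only [Finset.sum_mul, Finset.mul_sum, Finset.smul_sum, smul_mul_assoc, mul_smul_comm,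
      smul_smul]
  calc superBracket m t G (∑ d, s d • (X d * Y d))
      = ∑ d, ∑ c, (s d * M d c) • (X c * Y d) +
          ∑ d, ∑ c, (s d * sgn (m * q d) * N c d) • (X d * Y c) := by
        simp only [map_sum, map_smul, leibniz, smul_add, Finset.smul_sum, smul_smul,
          Finset.sum_add_distrib, mul_assoc]
    _ = ∑ d, ∑ c, (s d * M d c + s c * sgn (m * q c) * N d c) • (X c * Y d) := by
        rw [Finset.sum_comm (f := fun d c => (s d * sgn (m * q d) * N c d) • (X d * Y c))]
        simp only [add_smul, Finset.sum_add_distrib]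
    _ = 0 := by simp only [hdual, zero_smul, Finset.sum_const_zero]

end SuperBracket

section Weyl

variable {R : Type*} [Ring R] [Algebra ℂ R] {ι : Type*}

/-- The relations of the Weyl superalgebra, for coordinates `X a` of parity `q a` and their partial
derivatives `D a`, imposed on elements of an arbitrary algebra. -/
structure IsSuperWeylFamily [DecidableEq ι] (q : ι → ZMod 2) (X D : ι → R) : Prop where
  bracket_X_X (a b : ι) : superBracket (q a) (q b) (X a) (X b) = 0
  bracket_D_D (a b : ι) : superBracket (q a) (q b) (D a) (D b) = 0
  bracket_D_X (a b : ι) : superBracket (q a) (q b) (D a) (X b) = if a = b then 1 else 0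

lemma IsSuperWeylFamily.bracket_X_D [DecidableEq ι] {q : ι → ZMod 2} {X D : ι → R}
    (h : IsSuperWeylFamily q X D) (a b : ι) :
    superBracket (q a) (q b) (X a) (D b) = if b = a then -sgn (q b * q a) • 1 else 0 := by
  rw [superBracket_swap (q b) (q a), h.bracket_D_X, smul_ite, smul_zero]

/-- A matrix over `ℂ` is homogeneous of parity `m` when it shifts the parities `q` of the basis
vectors by `m`; in `ℤ/2` the condition `q b = m + q c` reads as below. -/
def IsHomogeneousMatrix (q : ι → ZMod 2) (m : ZMod 2) (M : Matrix ι ι ℂ) : Prop :=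
  ∀ b c, M b c ≠ 0 → q c + q b = m

variable [Fintype ι]

/-- The quadratic element `Σ_{b,c} M_{bc} X_c ∂_b` (first-order differential operator with linear
coefficients) attached to a matrix `M`. -/
def weylQuadratic (X D : ι → R) : Matrix ι ι ℂ →ₗ[ℂ] R where
  toFun M := ∑ b, ∑ c, M b c • (X c * D b)
  map_add' M N := by simp only [Matrix.add_apply, add_smul, Finset.sum_add_distrib]
  map_smul' r M := by
    simp only [Matrix.smul_apply, smul_assoc, Finset.smul_sum, RingHom.id_apply]

lemma weylQuadratic_apply (X D : ι → R) (M : Matrix ι ι ℂ) :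
    weylQuadratic X D M = ∑ b, ∑ c, M b c • (X c * D b) := rfl

variable {q : ι → ZMod 2} {m n x : ZMod 2} {M N : Matrix ι ι ℂ} {X D : ι → R}

lemma superBracket_weylQuadratic_eq_zero {A : R} (hM : IsHomogeneousMatrix q m M)
    (hX : ∀ a, superBracket x (q a) A (X a) = 0) (hD : ∀ a, superBracket x (q a) A (D a) = 0) :
    superBracket x m A (weylQuadratic X D M) = 0 := by
  simp only [weylQuadratic_apply, map_sum, map_smul]
  refine Finset.sum_eq_zero fun b _ => Finset.sum_eq_zero fun c _ => ?_
  by_cases hbc : M b c = 0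
  · rw [hbc, zero_smul]
  · rw [← hM b c hbc, superBracket_mul_right, hX, hD, zero_mul, mul_zero, smul_zero, add_zero,
      smul_zero]

namespace IsSuperWeylFamily

variable [DecidableEq ι]

lemma bracket_weylQuadratic_X (h : IsSuperWeylFamily q X D) (hM : IsHomogeneousMatrix q m M)
    (d : ι) : superBracket m (q d) (weylQuadratic X D M) (X d) = ∑ c, M d c • X c := by
  have term (b c : ι) : M b c • superBracket m (q d) (X c * D b) (X d) =
      if b = d then M b c • X c else 0 := by
    by_cases hbc : M b c = 0
    · simp only [hbc, zero_smul, ite_self]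
    · rw [← hM b c hbc, superBracket_mul_left, h.bracket_X_X, h.bracket_D_X, zero_mul, smul_zero,
        add_zero, mul_ite, mul_one, mul_zero, smul_ite, smul_zero]
  simp only [weylQuadratic_apply, map_sum, map_smul, LinearMap.sum_apply, LinearMap.smul_apply,
    term]
  rw [Finset.sum_comm]
  simp only [Finset.sum_ite_eq', Finset.mem_univ, if_true]

lemma bracket_weylQuadratic_D (h : IsSuperWeylFamily q X D) (hM : IsHomogeneousMatrix q m M)
    (d : ι) : superBracket m (q d) (weylQuadratic X D M) (D d) =
      -sgn (m * q d) • ∑ b, M b d • D b := by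
  have term (b c : ι) : M b c • superBracket m (q d) (X c * D b) (D d) =
      if d = c then -sgn (m * q d) • M b d • D b else 0 := by
    by_cases hbc : M b c = 0
    · by_cases hdc : d = c
      · simp only [hdc, hbc, zero_smul, smul_zero, ite_self]
      · simp only [hbc, hdc, zero_smul, if_false]
    · rw [← hM b c hbc, superBracket_mul_left, h.bracket_D_D, h.bracket_X_D, mul_zero, zero_add]
      split_ifs with hdc
      · subst hdc
        rw [add_mul, add_comm (q d * q d), sgn_add, smul_mul_assoc, one_mul]
        module
      · rw [zero_mul, smul_zero, smul_zero]
  simp only [weylQuadratic_apply, map_sum, map_smul, LinearMap.sum_apply, LinearMap.smul_apply,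
    term, Finset.sum_ite_eq, Finset.mem_univ, if_true, Finset.smul_sum]

lemma bracket_weylQuadratic_X_mul_D (h : IsSuperWeylFamily q X D)
    (hM : IsHomogeneousMatrix q m M) (b c : ι) :
    superBracket m (q c + q b) (weylQuadratic X D M) (X c * D b) =
      ∑ e, M c e • (X e * D b) - sgn (m * (q c + q b)) • ∑ e, M e b • (X c * D e) := by
  rw [superBracket_mul_right, h.bracket_weylQuadratic_X hM, h.bracket_weylQuadratic_D hM]
  simp only [mul_add, sgn_add, Finset.sum_mul, smul_mul_assoc, mul_smul_comm, Finset.mul_sum]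
  module

lemma bracket_weylQuadratic_weylQuadratic (h : IsSuperWeylFamily q X D)
    (hM : IsHomogeneousMatrix q m M) (hN : IsHomogeneousMatrix q n N) :
    superBracket m n (weylQuadratic X D M) (weylQuadratic X D N) =
      weylQuadratic X D (superBracket n m N M) := by
  have term (b c : ι) : N b c • superBracket m n (weylQuadratic X D M) (X c * D b) =
      ∑ e, (N b c * M c e) • (X e * D b) -
        sgn (n * m) • ∑ e, (M e b * N b c) • (X c * D e) := by
    by_cases hbc : N b c = 0
    · simp only [hbc, zero_smul, zero_mul, mul_zero, Finset.sum_const_zero, smul_zero, sub_zero]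
    · rw [← hN b c hbc, h.bracket_weylQuadratic_X_mul_D hM, smul_sub, smul_comm (N b c) (sgn _),
        mul_comm m]
      simp only [Finset.smul_sum, smul_smul, mul_comm (N b c)]
  have quadratic_N_mul_M : weylQuadratic X D (N * M) =
      ∑ b, ∑ c, ∑ e, (N b c * M c e) • (X e * D b) := by
    simp only [weylQuadratic_apply, Matrix.mul_apply, Finset.sum_smul]
    exact Finset.sum_congr rfl fun b _ => Finset.sum_comm
  have quadratic_M_mul_N : weylQuadratic X D (M * N) =
      ∑ b, ∑ c, ∑ e, (M e b * N b c) • (X c * D e) := by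
    simp only [weylQuadratic_apply, Matrix.mul_apply, Finset.sum_smul]
    calc ∑ e, ∑ c, ∑ b, (M e b * N b c) • (X c * D e)
        = ∑ e, ∑ b, ∑ c, (M e b * N b c) • (X c * D e) :=
          Finset.sum_congr rfl fun e _ => Finset.sum_comm
      _ = ∑ b, ∑ e, ∑ c, (M e b * N b c) • (X c * D e) := Finset.sum_comm
      _ = ∑ b, ∑ c, ∑ e, (M e b * N b c) • (X c * D e) :=
          Finset.sum_congr rfl fun b _ => Finset.sum_comm
  rw [superBracket_apply n m, map_sub, map_smul, quadratic_N_mul_M, quadratic_M_mul_N,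
    weylQuadratic_apply X D N]
  simp only [map_sum, map_smul, term, Finset.sum_sub_distrib, Finset.smul_sum]

end IsSuperWeylFamily

end Weyl

section Coadjoint

variable {ι : Type*} {p : ι → ZMod 2} {f : ι → ι → ι → ℂ}

/-- The bracket `[E_a, E_c] = Σ_b f a b c E_b` on a space with basis `E_a` of parity `p a` is
even. -/
def IsEvenBracket (p : ι → ZMod 2) (f : ι → ι → ι → ℂ) : Prop :=
  ∀ a b c, f a b c ≠ 0 → p b = p a + p c

/-- The Jacobi identity `[E_a, [E_b, E_c]] = [[E_a, E_b], E_c] + (-1)^{[a][b]} [E_b, [E_a, E_c]]` in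
Leibniz form, read off at the coefficient of `E_d`. -/
def IsLeibnizBracket [Fintype ι] (p : ι → ZMod 2) (f : ι → ι → ι → ℂ) : Prop :=
  ∀ a b c d, ∑ e, f b e c * f a d e =
    ∑ e, f a e b * f e d c + sgn (p a * p b) * ∑ e, f a e c * f b d e

/-- The matrix of the coadjoint action of `E_a` on the parity-reversed dual, the coordinates of the
image of `X_b` being the `b`-th row. -/
def coadjointMatrix (p : ι → ZMod 2) (f : ι → ι → ι → ℂ) (a : ι) : Matrix ι ι ℂ :=
  .of fun b c => -(sgn (p a * p c) * f a b c)

lemma coadjointMatrix_apply (a b c : ι) :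
    coadjointMatrix p f a b c = -(sgn (p a * p c) * f a b c) := rfl

lemma IsEvenBracket.isHomogeneousMatrix_coadjointMatrix (hf : IsEvenBracket p f) (a : ι) :
    IsHomogeneousMatrix (fun b => p b + 1) (p a) (coadjointMatrix p f a) := by
  intro b c hbc
  have hne : f a b c ≠ 0 := fun h => hbc (by rw [coadjointMatrix_apply, h, mul_zero, neg_zero])
  simp only [hf a b c hne]
  generalize p a = x, p c = y
  decide +revert

lemma IsEvenBracket.coadjointMatrix_dual (hf : IsEvenBracket p f) (a c d : ι) :
    sgn (p d) * coadjointMatrix p f a d c + sgn (p c) * sgn (p a * (p c + 1)) * f a d c = 0 := by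
  by_cases hne : f a d c = 0
  · simp only [coadjointMatrix_apply, hne, mul_zero, neg_zero, add_zero]
  · rw [coadjointMatrix_apply, hf a d c hne, sgn_add, mul_add, sgn_add, mul_one]
    ring

variable [Fintype ι]

lemma weylQuadratic_coadjointMatrix {R : Type*} [Ring R] [Algebra ℂ R] (X D : ι → R) (a : ι) :
    weylQuadratic X D (coadjointMatrix p f a) =
      -∑ b, ∑ c, (sgn (p a * p c) * f a b c) • (X c * D b) := by
  simp only [weylQuadratic_apply, coadjointMatrix_apply, neg_smul, Finset.sum_neg_distrib]

lemma IsEvenBracket.coadjointMatrix_mul_apply (hf : IsEvenBracket p f) (a d b c : ι) :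
    (coadjointMatrix p f a * coadjointMatrix p f d) b c =
      sgn (p a * p d) * sgn ((p a + p d) * p c) * ∑ e, f d e c * f a b e := by
  simp only [Matrix.mul_apply, coadjointMatrix_apply, Finset.mul_sum]
  refine Finset.sum_congr rfl fun e _ => ?_
  by_cases hne : f d e c = 0
  · simp only [hne, mul_zero, zero_mul, neg_zero]
  · rw [hf d e c hne, mul_add, add_mul, sgn_add, sgn_add]
    ring

lemma IsEvenBracket.sum_smul_coadjointMatrix_apply (hf : IsEvenBracket p f) (a d b c : ι) :
    (∑ e, f a e d • coadjointMatrix p f e) b c =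
      -(sgn ((p a + p d) * p c) * ∑ e, f a e d * f e b c) := by
  simp only [Matrix.sum_apply, Matrix.smul_apply, coadjointMatrix_apply, smul_eq_mul,
    Finset.mul_sum, ← Finset.sum_neg_distrib]
  refine Finset.sum_congr rfl fun e _ => ?_
  by_cases hne : f a e d = 0
  · simp only [hne, mul_zero, zero_mul, neg_zero]
  · rw [hf a e d hne]
    ring

lemma IsEvenBracket.superBracket_coadjointMatrix [DecidableEq ι] (hf : IsEvenBracket p f)
    (hjac : IsLeibnizBracket p f) (a d : ι) :
    superBracket (p d) (p a) (coadjointMatrix p f d) (coadjointMatrix p f a) =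
      ∑ e, f a e d • coadjointMatrix p f e := by
  ext b c
  rw [hf.sum_smul_coadjointMatrix_apply, superBracket_apply, Matrix.sub_apply, Matrix.smul_apply,
    hf.coadjointMatrix_mul_apply, hf.coadjointMatrix_mul_apply, smul_eq_mul, mul_comm (p d) (p a),
    add_comm (p d) (p a)]
  linear_combination (-sgn ((p a + p d) * p c)) * hjac a d c b -
    sgn ((p a + p d) * p c) * (∑ e, f d e c * f a b e) * sgn_mul_self (p a * p d)

end Coadjoint

section Grading

variable {p : Λ → ZMod 2} {f : Λ → Λ → Λ → ℂ}

lemma genWU_mem_WUpar (s : WUGen Λ) : genWU p f s ∈ WUpar p f (s.parity p) :=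
  Submodule.subset_span ⟨[s], by simp, by simp⟩

lemma mul_mem_WUpar {ε η : ZMod 2} {v w : WU p f} (hv : v ∈ WUpar p f ε) (hw : w ∈ WUpar p f η) :
    v * w ∈ WUpar p f (ε + η) := by
  have hvw := Submodule.mul_mem_mul hv hw
  rw [WUpar, WUpar, Submodule.span_mul_span] at hvw
  refine Submodule.span_mono ?_ hvw
  rintro _ ⟨_, ⟨k, rfl, rfl⟩, _, ⟨l, rfl, rfl⟩, rfl⟩
  exact ⟨k ++ l, by simp, by simp⟩

lemma GamU_eq_weylQuadratic (a : Λ) :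
    GamU p f a = weylQuadratic (XU p f) (DU p f) (coadjointMatrix p f a) :=
  (weylQuadratic_coadjointMatrix (XU p f) (DU p f) a).symm

lemma IsEvenBracket.GamU_mem_WUpar (hf : IsEvenBracket p f) (a : Λ) :
    GamU p f a ∈ WUpar p f (p a) := by
  rw [GamU_eq_weylQuadratic, weylQuadratic_apply]
  refine Submodule.sum_mem _ fun b _ => Submodule.sum_mem _ fun c _ => ?_
  by_cases hbc : coadjointMatrix p f a b c = 0
  · rw [hbc, zero_smul]
    exact Submodule.zero_mem _
  · rw [← hf.isHomogeneousMatrix_coadjointMatrix a b c hbc]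
    exact Submodule.smul_mem _ _ (mul_mem_WUpar (genWU_mem_WUpar (.X c)) (genWU_mem_WUpar (.D b)))

lemma sum_smul_XU_mul_mem_WUpar {Y : Λ → WU p f} (hY : ∀ a, Y a ∈ WUpar p f (p a)) (s : Λ → ℂ) :
    ∑ a, s a • (XU p f a * Y a) ∈ WUpar p f 1 := by
  refine Submodule.sum_mem _ fun a _ => Submodule.smul_mem _ _ ?_
  exact add_one_add_self_eq_one (p a) ▸ mul_mem_WUpar (genWU_mem_WUpar (.X a)) (hY a)

lemma delta1_mem_WUpar : delta1 p f ∈ WUpar p f 1 :=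
  sum_smul_XU_mul_mem_WUpar (fun a => genWU_mem_WUpar (.E a)) _

lemma IsEvenBracket.delta2_mem_WUpar (hf : IsEvenBracket p f) : delta2 p f ∈ WUpar p f 1 :=
  Submodule.smul_mem _ _ (sum_smul_XU_mul_mem_WUpar hf.GamU_mem_WUpar _)

end Grading

section Relations

variable (p : Λ → ZMod 2) (f : Λ → Λ → Λ → ℂ)

lemma isSuperWeylFamily_XU_DU : IsSuperWeylFamily (fun a => p a + 1) (XU p f) (DU p f) where
  bracket_X_X a b := by
    have h := RingQuot.mkAlgHom_rel ℂ (WURel.XX (p := p) (f := f) a b)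
    simp only [map_mul, map_smul] at h
    exact sub_eq_zero.mpr h
  bracket_D_D a b := by
    have h := RingQuot.mkAlgHom_rel ℂ (WURel.DD (p := p) (f := f) a b)
    simp only [map_mul, map_smul] at h
    exact sub_eq_zero.mpr h
  bracket_D_X a b := by
    have h := RingQuot.mkAlgHom_rel ℂ (WURel.DX (p := p) (f := f) a b)
    simp only [map_mul, map_smul, map_add, apply_ite (RingQuot.mkAlgHom ℂ (WURel p f)), map_one,
      map_zero] at h
    exact sub_eq_iff_eq_add'.mpr h

lemma superBracket_EU_EU (a b : Λ) :
    superBracket (p a) (p b) (EU p f a) (EU p f b) = ∑ e, f a e b • EU p f e := by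
  have h := RingQuot.mkAlgHom_rel ℂ (WURel.EE (p := p) (f := f) a b)
  simp only [map_mul, map_smul, map_add, map_sum] at h
  exact sub_eq_iff_eq_add'.mpr h

lemma superBracket_EU_XU (a b : Λ) :
    superBracket (p a) (p b + 1) (EU p f a) (XU p f b) = 0 := by
  have h := RingQuot.mkAlgHom_rel ℂ (WURel.EX (p := p) (f := f) a b)
  simp only [map_mul, map_smul] at h
  exact sub_eq_zero.mpr h

lemma superBracket_EU_DU (a b : Λ) :
    superBracket (p a) (p b + 1) (EU p f a) (DU p f b) = 0 := by
  have h := RingQuot.mkAlgHom_rel ℂ (WURel.ED (p := p) (f := f) a b)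
  simp only [map_mul, map_smul] at h
  exact sub_eq_zero.mpr h

end Relations

section Invariance

variable {p : Λ → ZMod 2} {f : Λ → Λ → Λ → ℂ}

lemma IsEvenBracket.superBracket_EU_GamU (hf : IsEvenBracket p f) (a d : Λ) :
    superBracket (p a) (p d) (EU p f a) (GamU p f d) = 0 := by
  rw [GamU_eq_weylQuadratic]
  exact superBracket_weylQuadratic_eq_zero (hf.isHomogeneousMatrix_coadjointMatrix d)
    (superBracket_EU_XU p f a) (superBracket_EU_DU p f a)

lemma IsEvenBracket.superBracket_GamU_GamU (hf : IsEvenBracket p f) (hjac : IsLeibnizBracket p f)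
    (a d : Λ) : superBracket (p a) (p d) (GamU p f a) (GamU p f d) = ∑ e, f a e d • GamU p f e := by
  simp only [GamU_eq_weylQuadratic]
  rw [(isSuperWeylFamily_XU_DU p f).bracket_weylQuadratic_weylQuadratic
    (hf.isHomogeneousMatrix_coadjointMatrix a) (hf.isHomogeneousMatrix_coadjointMatrix d),
    hf.superBracket_coadjointMatrix hjac, map_sum]
  simp only [map_smul]

lemma IsEvenBracket.superBracket_GamU_add_EU_XU (hf : IsEvenBracket p f) (a d : Λ) :
    superBracket (p a) (p d + 1) (GamU p f a + EU p f a) (XU p f d) =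
      ∑ c, coadjointMatrix p f a d c • XU p f c := by
  rw [map_add, LinearMap.add_apply, superBracket_EU_XU, add_zero, GamU_eq_weylQuadratic]
  exact (isSuperWeylFamily_XU_DU p f).bracket_weylQuadratic_X
    (hf.isHomogeneousMatrix_coadjointMatrix a) d

lemma IsEvenBracket.superBracket_GamU_add_EU_EU (hf : IsEvenBracket p f) (a d : Λ) :
    superBracket (p a) (p d) (GamU p f a + EU p f a) (EU p f d) = ∑ e, f a e d • EU p f e := by
  rw [map_add, LinearMap.add_apply, superBracket_swap (p d), hf.superBracket_EU_GamU, smul_zero,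
    zero_add, superBracket_EU_EU]

lemma IsEvenBracket.superBracket_GamU_add_EU_GamU (hf : IsEvenBracket p f)
    (hjac : IsLeibnizBracket p f) (a d : Λ) :
    superBracket (p a) (p d) (GamU p f a + EU p f a) (GamU p f d) = ∑ e, f a e d • GamU p f e := by
  rw [map_add, LinearMap.add_apply, hf.superBracket_EU_GamU, add_zero,
    hf.superBracket_GamU_GamU hjac]

lemma IsEvenBracket.superBracket_sum_XU_mul_eq_zero (hf : IsEvenBracket p f) {Y : Λ → WU p f}
    {a : Λ} (hY : ∀ d, superBracket (p a) (p d) (GamU p f a + EU p f a) (Y d) =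
      ∑ e, f a e d • Y e) :
    superBracket (p a) 1 (GamU p f a + EU p f a) (∑ d, sgn (p d) • (XU p f d * Y d)) = 0 :=
  superBracket_contraction_eq_zero (fun d => add_one_add_self_eq_one (p d))
    (hf.superBracket_GamU_add_EU_XU a) hY (hf.coadjointMatrix_dual a)

lemma IsEvenBracket.superBracket_delta1_eq_zero (hf : IsEvenBracket p f) (a : Λ) :
    superBracket (p a) 1 (GamU p f a + EU p f a) (delta1 p f) = 0 :=
  hf.superBracket_sum_XU_mul_eq_zero (hf.superBracket_GamU_add_EU_EU a)

lemma IsEvenBracket.superBracket_delta2_eq_zero (hf : IsEvenBracket p f)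
    (hjac : IsLeibnizBracket p f) (a : Λ) :
    superBracket (p a) 1 (GamU p f a + EU p f a) (delta2 p f) = 0 := by
  rw [delta2, map_smul,
    hf.superBracket_sum_XU_mul_eq_zero (hf.superBracket_GamU_add_EU_GamU hjac a), smul_zero]

end Invariance

theorem delta_is_odd_invariant_general
    (p : Λ → ZMod 2) (f : Λ → Λ → Λ → ℂ)
    (hpar : ∀ a b c, f a b c ≠ 0 → p b = p a + p c)
    (hjac : ∀ a b c d, ∑ e : Λ, f b e c * f a d e =
      ∑ e : Λ, f a e b * f e d c + sgn (p a * p b) * ∑ e : Λ, f a e c * f b d e) :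
    delta1 p f ∈ WUpar p f 1 ∧
    delta2 p f ∈ WUpar p f 1 ∧
    ∀ (ε : ZMod 2) (u : Λ → ℂ), (∀ a, u a ≠ 0 → p a = ε) →
      ((∑ a : Λ, u a • (GamU p f a + EU p f a)) * delta1 p f
          - sgn ε • (delta1 p f * ∑ a : Λ, u a • (GamU p f a + EU p f a)) = 0) ∧
      ((∑ a : Λ, u a • (GamU p f a + EU p f a)) * delta2 p f
          - sgn ε • (delta2 p f * ∑ a : Λ, u a • (GamU p f a + EU p f a)) = 0) ∧
      ((∑ a : Λ, u a • (GamU p f a + EU p f a)) * deltaWU p f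
          - sgn ε • (deltaWU p f * ∑ a : Λ, u a • (GamU p f a + EU p f a)) = 0) := by
  have hf : IsEvenBracket p f := hpar
  refine ⟨delta1_mem_WUpar, hf.delta2_mem_WUpar, fun ε u hu => ?_⟩
  have invariant₁ := superBracket_sum_smul_eq_zero hu hf.superBracket_delta1_eq_zero
  have invariant₂ := superBracket_sum_smul_eq_zero hu (hf.superBracket_delta2_eq_zero hjac)
  simp only [← superBracket_one_right]
  exact ⟨invariant₁, invariant₂, by rw [deltaWU, map_add, invariant₁, invariant₂, add_zero]⟩

/-- Lemma 3.6 of the paper: `δ₁`, `δ₂`, and hence `δ = δ₁ + δ₂`, are odd `g`-invariant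
elements of `W ⊗ U(g)`: `[Γ(A) ⊗ 1 + 1 ⊗ A, δᵢ] = 0` for every homogeneous `A ∈ g`. -/
theorem delta_is_odd_invariant
    (p : Λ → ZMod 2) (f : Λ → Λ → Λ → ℂ)
    (hpar : ∀ a b c, f a b c ≠ 0 → p b = p a + p c)
    (hskew : ∀ a b c, f a b c = -sgn (p a * p c) * f c b a)
    (hjac : ∀ a b c d, ∑ e : Λ, f b e c * f a d e =
      ∑ e : Λ, f a e b * f e d c + sgn (p a * p b) * ∑ e : Λ, f a e c * f b d e) :
    -- δ₁ and δ₂ (hence δ) are odd: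
    delta1 p f ∈ WUpar p f 1 ∧
    delta2 p f ∈ WUpar p f 1 ∧
    -- [Γ(A) ⊗ 1 + 1 ⊗ A, δ₁] = 0, [Γ(A) ⊗ 1 + 1 ⊗ A, δ₂] = 0, and
    -- [Γ(A) ⊗ 1 + 1 ⊗ A, δ] = 0 for every homogeneous A ∈ g:
    ∀ (ε : ZMod 2) (u : Λ → ℂ), (∀ a, u a ≠ 0 → p a = ε) →
      ((∑ a : Λ, u a • (GamU p f a + EU p f a)) * delta1 p f
          - sgn ε • (delta1 p f * ∑ a : Λ, u a • (GamU p f a + EU p f a)) = 0) ∧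
      ((∑ a : Λ, u a • (GamU p f a + EU p f a)) * delta2 p f
          - sgn ε • (delta2 p f * ∑ a : Λ, u a • (GamU p f a + EU p f a)) = 0) ∧
      ((∑ a : Λ, u a • (GamU p f a + EU p f a)) * deltaWU p f
          - sgn ε • (deltaWU p f * ∑ a : Λ, u a • (GamU p f a + EU p f a)) = 0) :=
  delta_is_odd_invariant_general p f hpar hjac
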